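/- Let (G,T) be a bipartite graft and F a minimum join of (G,T). Then for every edge xy ∈ F, there exists exactly one subgraph K of G such that K is a decapital distance component of (G,T) with respect to some root r ∈ V(G) and x and y are, respectively, the F-root and F-antiroot of K. -/

import Mathlib

/-!
Fix an edge `xy` of the minimum join `F` and a decapital distance component `K`, with respect to
some root `r` and level `i`, with `x ∈ K` and `y ∉ K`. The idea is that `K` can be recovered from
`y` alone: it is the component containing `x` of the set of vertices at negative `F`-distance from
`y`. This gives uniqueness (`Cons.decap`, `Cons.decap_subset`), and taking `r = y`, `i = -1` gives
existence (`Cons.exists_decap`).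

Since adjacent vertices have distances from `r` that differ by exactly one, `y` has distance `i + 1`
and `x` has distance `i`. Two facts about the level sets of the distance from `r` are needed.

* Every `v ∈ K` has negative distance from `y`. A shortest path `P` from `r` to `v` uses the edge
  `xy`. Otherwise `xy` lies in `F ∆ P`, which is a minimum join after the parities at `r` and `v`
  are switched, and then `y`, as the other end of an edge of that join at a vertex in the
  `i`-th level component of `v`, would have distance at most `i`. The part of `P` up to `y` has
  weight at least `i + 1`, so the rest of it is a path from `y` to `v` of negative weight.
* Every neighbour `v ∉ K` of `K` has nonnegative distance from `y`: both `y` and `v` have distance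
  exactly `i + 1` and lie in one component of the level set of `i + 1`, and paths between such
  vertices have nonnegative weight.

Both facts are instances of `Sys.main`, a form of Sebő's theorem on distances in bipartite grafts.
It is proved for an abstract system `Sys` consisting of a multigraph and a potential `h`, where
`h v` is the least size of an edge set with the boundary `T + v`. The induction contracts the
closed neighbourhood of a vertex `t` of lowest potential, all of whose neighbours have potential
`h t + 1`. A minimum join for any vertex has at most one edge at `t` (none if the vertex is `t`),
and deleting that edge leaves a minimum join of the contracted system (`Low.contr_min`), in which
every potential except that of `t` drops by one. The level components of the two systems correspond
to each other. Boundaries are finitely supported functions to `ZMod 2`, so that the boundary in the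
contracted multigraph is `Finsupp.mapDomain` of the original one.

The only property of `F` used in the graph is that edge sets with boundary zero have nonnegative
`F`-weight (`Cons`).
-/

namespace TightCuts

open SimpleGraph

variable {V : Type*}

/-- `(G, T)` is a graft: every connected component of `G` contains an even
number of vertices of `T`. -/
def IsGraft (G : SimpleGraph V) (T : Set V) : Prop :=
  ∀ c : G.ConnectedComponent, Even ((T ∩ {v | G.connectedComponentMk v = c}).ncard)

/-- `F` is a join of the graft `(G, T)`: a set of edges such that a vertex is
incident with an odd number of edges of `F` exactly when it lies in `T`. -/
def IsJoin (G : SimpleGraph V) (T : Set V) (F : Set (Sym2 V)) : Prop :=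
  F ⊆ G.edgeSet ∧ ∀ v : V, (Odd ({e ∈ F | v ∈ e}).ncard ↔ v ∈ T)

/-- `ν(G, T)`: the minimum size of a join of `(G, T)`. -/
noncomputable def nu (G : SimpleGraph V) (T : Set V) : ℕ :=
  sInf {n | ∃ F : Set (Sym2 V), IsJoin G T F ∧ F.ncard = n}

/-- `F` is a minimum join of `(G, T)`. -/
def IsMinJoin (G : SimpleGraph V) (T : Set V) (F : Set (Sym2 V)) : Prop :=
  IsJoin G T F ∧ F.ncard = nu G T

open Classical in
/-- The `F`-weight of an edge: `-1` if the edge lies in `F`, `+1` otherwise. -/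
noncomputable def edgeWt (F : Set (Sym2 V)) (e : Sym2 V) : ℤ :=
  if e ∈ F then -1 else 1

/-- The `F`-weight of a walk: the sum of the `F`-weights of its edges. -/
noncomputable def walkWt (F : Set (Sym2 V)) {G : SimpleGraph V} {x y : V}
    (p : G.Walk x y) : ℤ :=
  (p.edges.map (edgeWt F)).sum

/-- The `F`-distance between `x` and `y`: the minimum `F`-weight of a path
between `x` and `y`. -/
noncomputable def distF (G : SimpleGraph V) (F : Set (Sym2 V)) (x y : V) : ℤ :=
  sInf {n : ℤ | ∃ p : G.Walk x y, p.IsPath ∧ walkWt F p = n}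

/-- `K` is (the vertex set of) a connected component of the subgraph of `G`
induced by `U`. -/
def IsComponentOf (G : SimpleGraph V) (U K : Set V) : Prop :=
  K.Nonempty ∧ K ⊆ U ∧ (G.induce K).Connected ∧
    ∀ x ∈ K, ∀ y ∈ U, G.Adj x y → y ∈ K

/-- `K` is a distance component of the graft with respect to root `r` at level `i`
(with respect to a minimum join `F`): `i` is attained as an `F`-distance from `r`,
and `K` is a connected component of the subgraph induced by the vertices at
`F`-distance at most `i` from `r`. -/
def IsDistCompAt (G : SimpleGraph V) (F : Set (Sym2 V)) (r : V) (i : ℤ) (K : Set V) : Prop :=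
  (∃ x, distF G F r x = i) ∧ IsComponentOf G {x | distF G F r x ≤ i} K

/-- `K` is a decapital distance component with respect to root `r`: a distance
component (at some level) not containing `r`. -/
def IsDecapDistComp (G : SimpleGraph V) (F : Set (Sym2 V)) (r : V) (K : Set V) : Prop :=
  ∃ i : ℤ, IsDistCompAt G F r i K ∧ r ∉ K

/-- The edge cut `δ_G(K)`: edges of `G` with exactly one end in `K`. -/
def cutEdges (G : SimpleGraph V) (K : Set V) : Set (Sym2 V) :=
  {e | e ∈ G.edgeSet ∧ ∃ x y, e = s(x, y) ∧ x ∈ K ∧ y ∉ K}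

/-- An edge is allowed in `(G, T)` if some minimum join contains it. -/
def Allowed (G : SimpleGraph V) (T : Set V) (e : Sym2 V) : Prop :=
  ∃ F, IsMinJoin G T F ∧ e ∈ F

/-- Two vertices are factor-connected if there is a walk between them all of
whose edges are allowed. -/
def FactorConnected (G : SimpleGraph V) (T : Set V) (u v : V) : Prop :=
  ∃ p : G.Walk u v, ∀ e ∈ p.edges, Allowed G T e

/-- `C` is (the vertex set of) a factor-component of `(G, T)`: an equivalence
class of factor-connectivity. -/
def IsFactorComponent (G : SimpleGraph V) (T : Set V) (C : Set V) : Prop :=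
  ∃ v, C = {u | FactorConnected G T u v}

/-- The Kotzig–Lovász relation: `u ∼ v` iff `u = v`, or `u` and `v` are
factor-connected (hence in the same factor-component) and
`ν(G, T) = ν(G, T Δ {u, v})`. -/
def klRel (G : SimpleGraph V) (T : Set V) (u v : V) : Prop :=
  u = v ∨ (FactorConnected G T u v ∧ nu G T = nu G (symmDiff T {u, v}))

/-- `S` is a Kotzig–Lovász class of `(G, T)`. -/
def IsKLClass (G : SimpleGraph V) (T : Set V) (S : Set V) : Prop :=
  ∃ v, S = {u | klRel G T u v}

/-- `A(K)` for a distance component `K` at level `i`: the vertices of `K` at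
`F`-distance exactly `i` from `r`. -/
def AK (G : SimpleGraph V) (F : Set (Sym2 V)) (r : V) (i : ℤ) (K : Set V) : Set V :=
  K ∩ {x | distF G F r x = i}

/-- `D(K) = V(K) \ A(K)`. -/
def DK (G : SimpleGraph V) (F : Set (Sym2 V)) (r : V) (i : ℤ) (K : Set V) : Set V :=
  K \ AK G F r i K

/-- `S` is the root class of `K`: a Kotzig–Lovász class containing all ends in
`K` of allowed edges of the cut `δ_G(K)`. -/
def IsRootClass (G : SimpleGraph V) (T : Set V) (K S : Set V) : Prop :=
  IsKLClass G T S ∧ ∀ e ∈ cutEdges G K, Allowed G T e → ∀ u ∈ e, u ∈ K → u ∈ S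

/-- `S` is the antiroot class of `K`: a Kotzig–Lovász class containing all ends
outside `K` of allowed edges of the cut `δ_G(K)`. -/
def IsAntirootClass (G : SimpleGraph V) (T : Set V) (K S : Set V) : Prop :=
  IsKLClass G T S ∧ ∀ e ∈ cutEdges G K, Allowed G T e → ∀ u ∈ e, u ∉ K → u ∈ S

/-- The family `𝒜(K)`: the root fragment `K ∩ S_K` together with all
Kotzig–Lovász classes other than `S_K` that contain a vertex of `A(K)`. -/
def famA (G : SimpleGraph V) (T : Set V) (F : Set (Sym2 V)) (r : V) (i : ℤ)
    (K S_K : Set V) : Set (Set V) :=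
  insert (K ∩ S_K) {S | IsKLClass G T S ∧ S ≠ S_K ∧ (S ∩ AK G F r i K).Nonempty}

/-- `L` is adjacent to a vertex of `S` by an allowed edge. -/
def AdjAllowed (G : SimpleGraph V) (T : Set V) (L S : Set V) : Prop :=
  ∃ x ∈ L, ∃ s ∈ S, G.Adj x s ∧ Allowed G T s(x, s)

/-- `𝒩_K(S)`: the family of connected components of `G[D(K)]` adjacent to a
vertex of `S` by an allowed edge. -/
def NKfam (G : SimpleGraph V) (T : Set V) (F : Set (Sym2 V)) (r : V) (i : ℤ)
    (K S : Set V) : Set (Set V) :=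
  {L | IsComponentOf G (DK G F r i K) L ∧ AdjAllowed G T L S}

/-- `U_K(S)`: the union of the vertex sets of the members of `𝒩_K(S)`. -/
def UK (G : SimpleGraph V) (T : Set V) (F : Set (Sym2 V)) (r : V) (i : ℤ)
    (K S : Set V) : Set V :=
  ⋃₀ NKfam G T F r i K S

/-- `X` is an `F`-negative set for `S`: `X` is disjoint from `S` and every
`x ∈ X` admits a path of negative `F`-weight from `x` to a vertex of `S` whose
vertices, except the end in `S`, all lie in `X`. -/
def IsNegSet (G : SimpleGraph V) (F : Set (Sym2 V)) (S X : Set V) : Prop :=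
  X ⊆ Sᶜ ∧ ∀ x ∈ X, ∃ y ∈ S, ∃ p : G.Walk x y, p.IsPath ∧ walkWt F p < 0 ∧
    ∀ v ∈ p.support, v ≠ y → v ∈ X

/-- The maximum `F`-negative set for `S`: the union of all `F`-negative sets
for `S`. -/
def maxNegSet (G : SimpleGraph V) (F : Set (Sym2 V)) (S : Set V) : Set V :=
  ⋃₀ {X | IsNegSet G F S X}

/-- The maximum `F`-negative set for `S` avoiding `Y`. -/
def maxNegSetAvoiding (G : SimpleGraph V) (F : Set (Sym2 V)) (S Y : Set V) : Set V :=
  ⋃₀ {X | IsNegSet G F S X ∧ Disjoint X Y}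

/-! ### Boundaries and weights of edge sets in a multigraph -/

section Multigraph

set_option linter.unusedSectionVars false

variable {E : Type*} [DecidableEq V] [DecidableEq E]

/-- The mod-2 boundary of a set `J` of edges in the multigraph whose edge `e` has the ends `p e`
and `q e`: the value at `v` is the parity of the `J`-degree of `v`. Loops contribute nothing.
As a finitely supported function it can be pushed forward along a contraction. -/
noncomputable def bd (p q : E → V) (J : Finset E) : V →₀ ZMod 2 :=
  ∑ e ∈ J, (Finsupp.single (p e) 1 + Finsupp.single (q e) 1)

/-- The `F`-weight of the edge set `J`. -/
def wt (F J : Finset E) : ℤ := ∑ e ∈ J, if e ∈ F then -1 else 1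

lemma add_self_finsupp (x : V →₀ ZMod 2) : x + x = 0 := by
  ext v; exact CharTwo.add_self_eq_zero _

lemma bd_disjUnion (p q : E → V) {A B : Finset E} (h : Disjoint A B) :
    bd p q (A ∪ B) = bd p q A + bd p q B := Finset.sum_union h

lemma bd_sdiff (p q : E → V) {A B : Finset E} (h : A ⊆ B) :
    bd p q (B \ A) = bd p q B + bd p q A := by
  have h1 : bd p q (B \ A) + bd p q A = bd p q B := Finset.sum_sdiff h
  rw [← h1, add_assoc, add_self_finsupp, add_zero]

lemma bd_symmDiff (p q : E → V) (A B : Finset E) :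
    bd p q (symmDiff A B) = bd p q A + bd p q B := by
  have h1 : symmDiff A B = (A \ (A ∩ B)) ∪ (B \ (A ∩ B)) := by
    ext e; simp only [Finset.mem_symmDiff, Finset.mem_union, Finset.mem_sdiff, Finset.mem_inter]
    tauto
  have h2 : Disjoint (A \ (A ∩ B)) (B \ (A ∩ B)) := by
    rw [Finset.disjoint_left]; intro e
    simp only [Finset.mem_sdiff, Finset.mem_inter]; tauto
  rw [h1, bd_disjUnion _ _ h2, bd_sdiff _ _ Finset.inter_subset_left,
    bd_sdiff _ _ Finset.inter_subset_right]
  have := add_self_finsupp (bd p q (A ∩ B))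
  calc _ = bd p q A + bd p q B + (bd p q (A ∩ B) + bd p q (A ∩ B)) := by abel
    _ = _ := by rw [this, add_zero]

lemma wt_sdiff (F : Finset E) {A B : Finset E} (h : A ⊆ B) :
    wt F B = wt F A + wt F (B \ A) := by
  have h1 : wt F (B \ A) + wt F A = wt F B := Finset.sum_sdiff h
  omega

lemma card_symmDiff_wt (F J : Finset E) :
    ((symmDiff F J).card : ℤ) = F.card + wt F J := by
  have h1 : wt F J = ((J \ F).card : ℤ) - (F ∩ J).card := by
    have := wt_sdiff F (Finset.inter_subset_right : F ∩ J ⊆ J)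
    have h2 : J \ (F ∩ J) = J \ F := by ext; simp
    rw [this, h2]
    have h3 : wt F (F ∩ J) = -((F ∩ J).card : ℤ) := by
      unfold wt
      rw [Finset.sum_congr rfl (g := fun _ => (-1 : ℤ))]
      · simp
      · intro e he; simp [(Finset.mem_inter.1 he).1]
    have h4 : wt F (J \ F) = ((J \ F).card : ℤ) := by
      unfold wt
      rw [Finset.sum_congr rfl (g := fun _ => (1 : ℤ))]
      · simp
      · intro e he; simp [(Finset.mem_sdiff.1 he).2]
    rw [h3, h4]; ring
  have h5 : (symmDiff F J).card = (F \ J).card + (J \ F).card := by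
    rw [symmDiff_def, Finset.sup_eq_union, Finset.card_union_of_disjoint]
    exact disjoint_sdiff_sdiff
  have h6 := Finset.card_sdiff_add_card_inter F J
  rw [h1, h5]; push_cast; omega

/-- The edge `e` has the ends `a` and `b`. -/
def Joins (p q : E → V) (e : E) (a b : V) : Prop :=
  (p e = a ∧ q e = b) ∨ (p e = b ∧ q e = a)

lemma bd_singleton {p q : E → V} {e : E} {a b : V} (h : Joins p q e a b) :
    bd p q {e} = Finsupp.single a 1 + Finsupp.single b 1 := by
  rcases h with ⟨rfl, rfl⟩ | ⟨rfl, rfl⟩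
  · simp [bd]
  · simp [bd, add_comm]

/-- A vertex of odd degree in `Z` is linked inside `Z` to another vertex of odd degree, both by a
subset of `Z` with the expected boundary and by a chain of edges of `Z`. -/
lemma exists_subset_bd (p q : E → V) (Z : Finset E) : ∀ b : V, bd p q Z b = 1 →
    ∃ b', b' ≠ b ∧ bd p q Z b' = 1 ∧
      (∃ Q ⊆ Z, bd p q Q = Finsupp.single b 1 + Finsupp.single b' 1) ∧
      Relation.ReflTransGen (fun u w => ∃ e ∈ Z, Joins p q e u w) b b' := by
  induction Z using Finset.strongInduction with
  | H Z ih =>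
  intro b hb
  have h1 : ∃ e ∈ Z, ∃ z, z ≠ b ∧ Joins p q e b z := by
    by_contra! hcon
    have : bd p q Z b = 0 := by
      rw [bd, Finsupp.finsetSum_apply]
      apply Finset.sum_eq_zero
      intro e he
      have h2 := hcon e he
      by_cases hp : p e = b <;> by_cases hq : q e = b
      · simp only [hp, hq]; exact CharTwo.add_self_eq_zero _
      · exact absurd (Or.inl ⟨hp, rfl⟩) (h2 (q e) hq)
      · exact absurd (Or.inr ⟨rfl, hq⟩) (h2 (p e) hp)
      · simp [hp, hq]
    rw [this] at hb; exact zero_ne_one hb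
  obtain ⟨e, he, z, hz, hj⟩ := h1
  have heZ : {e} ⊆ Z := Finset.singleton_subset_iff.2 he
  by_cases hzZ : bd p q Z z = 1
  · exact ⟨z, hz, hzZ, ⟨{e}, heZ, bd_singleton hj⟩, .single ⟨e, he, hj⟩⟩
  have hbd := bd_sdiff p q heZ
  rw [bd_singleton hj] at hbd
  have hz0 : bd p q Z z = 0 := by
    generalize bd p q Z z = x at hzZ ⊢; revert x; decide
  have h3 : bd p q (Z \ {e}) z = 1 := by rw [hbd]; simp [hz0, hz.symm]
  have hb0 : bd p q (Z \ {e}) b = 0 := by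
    rw [hbd]; simp [hb, hz]; decide
  obtain ⟨b', hb'z, hb', ⟨Q, hQ, hQbd⟩, hch⟩ :=
    ih (Z \ {e}) (Finset.sdiff_ssubset heZ (Finset.singleton_nonempty e)) z h3
  have hb'b : b' ≠ b := by rintro rfl; rw [hb0] at hb'; exact zero_ne_one hb'
  refine ⟨b', hb'b, ?_, ⟨Q ∪ {e}, Finset.union_subset (hQ.trans Finset.sdiff_subset) heZ, ?_⟩,
    .head ⟨e, he, hj⟩ (Relation.ReflTransGen.mono
      (fun u w ⟨e', he', hj'⟩ => ⟨e', Finset.sdiff_subset he', hj'⟩) _ _ hch)⟩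
  · rw [hbd] at hb'; simpa [hb'z.symm, hb'b.symm] using hb'
  · rw [bd_disjUnion, hQbd, bd_singleton hj]
    · calc _ = Finsupp.single b 1 + Finsupp.single b' 1 +
            (Finsupp.single z 1 + Finsupp.single z (1 : ZMod 2)) := by abel
        _ = _ := by rw [add_self_finsupp, add_zero]
    · rw [Finset.disjoint_left]; intro x hx; exact (Finset.mem_sdiff.1 (hQ hx)).2

/-! ### Systems with a potential and the contraction at a lowest vertex -/

/-- `M` is a set of edges spanned by the vertex set `R`, and `h v` is the least size of a subset
of `M` with boundary `T + v`. The function `h` separates the ends of every edge, which is what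
bipartiteness gives. -/
structure Sys (p q : E → V) (M : Finset E) (T : V →₀ ZMod 2) (R : Finset V) (h : V → ℤ) :
    Prop where
  ends : ∀ e ∈ M, p e ∈ R ∧ q e ∈ R
  par : ∀ e ∈ M, h (p e) ≠ h (q e)
  att : ∀ v ∈ R, ∃ J ⊆ M, bd p q J = T + Finsupp.single v 1 ∧ (J.card : ℤ) = h v
  lb : ∀ v ∈ R, ∀ J ⊆ M, bd p q J = T + Finsupp.single v 1 → h v ≤ J.card

/-- `a` and `b` are connected by edges of `M` inside the level set `{v | h v ≤ ℓ}`. Connectedness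
is phrased through cuts. -/
def Conn (p q : E → V) (M : Finset E) (h : V → ℤ) (ℓ : ℤ) (a b : V) : Prop :=
  h a ≤ ℓ ∧ h b ≤ ℓ ∧ ∀ S : Set V, a ∈ S → b ∉ S →
    ∃ e ∈ M, h (p e) ≤ ℓ ∧ h (q e) ≤ ℓ ∧ (p e ∈ S ↔ q e ∉ S)

/-- The edges of `M` incident with `t`. -/
def star (p q : E → V) (M : Finset E) (t : V) : Finset E :=
  M.filter fun e => p e = t ∨ q e = t

/-- The contraction of `N ∪ {t}` to the single vertex `t`. -/
def contr (N : Finset V) (t : V) (v : V) : V := if v ∈ N then t else v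

/-- The vertex potential after contracting the closed neighbourhood of `t`. -/
def lowH (h : V → ℤ) (t v : V) : ℤ := if v = t then h t else h v - 1

lemma zmod2_ne_zero {x : ZMod 2} (h : x ≠ 0) : x = 1 := by revert x; decide

lemma bd_apply_eq_card {p q : E → V} {J : Finset E} (hl : ∀ e ∈ J, p e ≠ q e) (t : V) :
    bd p q J t = ((star p q J t).card : ZMod 2) := by
  rw [bd, Finsupp.finsetSum_apply, star, Finset.card_filter, Nat.cast_sum]
  refine Finset.sum_congr rfl fun e he => ?_
  have := hl e he
  by_cases h1 : p e = t <;> by_cases h2 : q e = t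
  · exact absurd (h1.trans h2.symm) this
  all_goals simp [h1, h2]

lemma bd_comp (f : V → V) (p q : E → V) (J : Finset E) :
    bd (fun e => f (p e)) (fun e => f (q e)) J = (bd p q J).mapDomain f := by
  simp [bd, Finsupp.mapDomain_finsetSum, Finsupp.mapDomain_add, Finsupp.mapDomain_single]

lemma mapDomain_contr_apply {N : Finset V} {t u : V} (hu : u ∉ N) (hut : u ≠ t)
    (x : V →₀ ZMod 2) : x.mapDomain (contr N t) u = x u := by
  induction x using Finsupp.induction_linear with
  | zero => simp
  | add f g hf hg => simp [Finsupp.mapDomain_add, hf, hg]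
  | single a c =>
    rw [Finsupp.mapDomain_single, Finsupp.single_apply, Finsupp.single_apply]
    have : contr N t a = u ↔ a = u := by
      unfold contr; split_ifs with h
      · constructor
        · intro h'; exact absurd h'.symm hut
        · rintro rfl; exact absurd h hu
      · rfl
    simp [this]

lemma wt_le_card (F J : Finset E) : wt F J ≤ J.card := by
  unfold wt
  calc _ ≤ ∑ e ∈ J, (1 : ℤ) := Finset.sum_le_sum fun e _ => by split_ifs <;> omega
    _ = _ := by simp

lemma wt_nonneg_of_even (F : Finset E) {J : Finset E} (he : Even J.card)
    (h1 : (F ∩ J).card ≤ 1) : 0 ≤ wt F J := by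
  have h2 : wt F J = J.card - 2 * (F ∩ J).card := by
    have h3 := card_symmDiff_wt F J
    have h5 : (symmDiff F J).card = (F \ J).card + (J \ F).card := by
      rw [symmDiff_def, Finset.sup_eq_union, Finset.card_union_of_disjoint]
      exact disjoint_sdiff_sdiff
    have h6 := Finset.card_sdiff_add_card_inter F J
    have h7 := Finset.card_sdiff_add_card_inter J F
    rw [Finset.inter_comm J F] at h7
    omega
  have h4 : (F ∩ J).card ≤ J.card := Finset.card_le_card Finset.inter_subset_right
  obtain ⟨k, hk⟩ := he
  omega

lemma Joins.symm {p q : E → V} {e : E} {a b : V} (h : Joins p q e a b) : Joins p q e b a :=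
  Or.symm h

namespace Sys

variable {p q : E → V} {M : Finset E} {T : V →₀ ZMod 2} {R : Finset V} {h : V → ℤ}

lemma joins_facts (H : Sys p q M T R h) {e : E} (he : e ∈ M) {a b : V} (hj : Joins p q e a b) :
    a ∈ R ∧ b ∈ R ∧ h a ≠ h b := by
  have h1 := H.ends e he
  have h2 := H.par e he
  rcases hj with ⟨rfl, rfl⟩ | ⟨rfl, rfl⟩
  · exact ⟨h1.1, h1.2, h2⟩
  · exact ⟨h1.2, h1.1, h2.symm⟩

/-- The potential changes by at most one along an edge. -/
lemma step (H : Sys p q M T R h) {e : E} (he : e ∈ M) {a b : V} (hj : Joins p q e a b) :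
    h b ≤ h a + 1 := by
  obtain ⟨ha, hb, -⟩ := H.joins_facts he hj
  obtain ⟨J, hJ, hbd, hc⟩ := H.att a ha
  have h1 := H.lb b hb (symmDiff J {e})
    (by
      intro z hz
      rcases Finset.mem_symmDiff.1 hz with h | h
      · exact hJ h.1
      · rw [Finset.mem_singleton.1 h.1]; exact he)
    (by
      rw [bd_symmDiff, hbd, bd_singleton hj]
      have := add_self_finsupp (Finsupp.single a (1 : ZMod 2))
      calc _ = T + Finsupp.single b 1 + (Finsupp.single a 1 + Finsupp.single a 1) := by abel
        _ = _ := by rw [this, add_zero])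
  have h2 := card_symmDiff_wt J {e}
  have h3 := wt_le_card J {e}
  simp only [Finset.card_singleton] at h3
  omega

/-- Removing from a join for `x` an edge at `x` gives a join for the other end. -/
lemma erase_le (H : Sys p q M T R h) {J : Finset E} (hJ : J ⊆ M) {x y : V}
    (hbd : bd p q J = T + Finsupp.single x 1) {e : E} (he : e ∈ J) (hj : Joins p q e x y) :
    h y ≤ J.card - 1 := by
  obtain ⟨-, hy, -⟩ := H.joins_facts (hJ he) hj
  have hs : {e} ⊆ J := Finset.singleton_subset_iff.2 he
  have h1 := H.lb y hy (J \ {e}) (Finset.sdiff_subset.trans hJ)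
    (by
      rw [bd_sdiff p q hs, hbd, bd_singleton hj]
      have := add_self_finsupp (Finsupp.single x (1 : ZMod 2))
      calc _ = T + Finsupp.single y 1 + (Finsupp.single x 1 + Finsupp.single x 1) := by abel
        _ = _ := by rw [this, add_zero])
  have h2 := Finset.card_sdiff_add_card_eq_card hs
  simp only [Finset.card_singleton] at h2
  omega

/-- Any set with the boundary `0` has nonnegative weight relative to a minimum join. -/
lemma wt_cycle (H : Sys p q M T R h) {r : V} (hr : r ∈ R) {F : Finset E} (hF : F ⊆ M)
    (hbd : bd p q F = T + Finsupp.single r 1) (hc : (F.card : ℤ) = h r) {Z : Finset E}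
    (hZ : Z ⊆ M) (hZ0 : bd p q Z = 0) : 0 ≤ wt F Z := by
  have h1 := H.lb r hr (symmDiff F Z) (symmDiff_le_sup.trans (sup_le hF hZ))
    (by rw [bd_symmDiff, hbd, hZ0, add_zero])
  have h2 := card_symmDiff_wt F Z
  omega

end Sys

/-- A vertex `t` of minimum potential together with its neighbourhood `N` and a minimum join `Ft`
for `t`. -/
structure Low (p q : E → V) (M : Finset E) (T : V →₀ ZMod 2) (R : Finset V) (h : V → ℤ)
    (t : V) (N : Finset V) (Ft : Finset E) : Prop extends Sys p q M T R h where
  ht : t ∈ R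
  hmin : ∀ v ∈ R, h t ≤ h v
  hN : ∀ v, v ∈ N ↔ ∃ e ∈ M, Joins p q e t v
  hFt : Ft ⊆ M
  hbd : bd p q Ft = T + Finsupp.single t 1
  hcard : (Ft.card : ℤ) = h t

namespace Low

variable {p q : E → V} {M : Finset E} {T : V →₀ ZMod 2} {R : Finset V} {h : V → ℤ}
  {t : V} {N : Finset V} {Ft : Finset E}

lemma nbr (L : Low p q M T R h t N Ft) {b : V} (hb : b ∈ N) : b ∈ R ∧ h b = h t + 1 := by
  obtain ⟨e, he, hj⟩ := (L.hN b).1 hb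
  obtain ⟨-, hb, hne⟩ := L.toSys.joins_facts he hj
  have h1 := L.toSys.step he hj
  have h2 := L.hmin b hb
  exact ⟨hb, by omega⟩

lemma t_notMem (L : Low p q M T R h t N Ft) : t ∉ N := fun ht => by
  have := (L.nbr ht).2; omega

lemma loopless (L : Low p q M T R h t N Ft) {e : E} (he : e ∈ M) : p e ≠ q e := fun hpq =>
  L.par e he (by rw [hpq])

lemma mem_star (L : Low p q M T R h t N Ft) {e : E} (he : e ∈ star p q M t) :
    ∃ b ∈ N, Joins p q e t b := by
  obtain ⟨heM, h1⟩ := Finset.mem_filter.1 he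
  rcases h1 with h1 | h1
  · exact ⟨q e, (L.hN _).2 ⟨e, heM, Or.inl ⟨h1, rfl⟩⟩, Or.inl ⟨h1, rfl⟩⟩
  · exact ⟨p e, (L.hN _).2 ⟨e, heM, Or.inr ⟨rfl, h1⟩⟩, Or.inr ⟨rfl, h1⟩⟩

/-- A minimum join for `t` avoids `t`. -/
lemma inter_star_t (L : Low p q M T R h t N Ft) {J : Finset E} (hJ : J ⊆ M)
    (hbd : bd p q J = T + Finsupp.single t 1) (hc : (J.card : ℤ) = h t) :
    J ∩ star p q M t = ∅ := by
  rw [Finset.eq_empty_iff_forall_notMem]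
  intro e he
  obtain ⟨heJ, hes⟩ := Finset.mem_inter.1 he
  obtain ⟨b, hb, hj⟩ := L.mem_star hes
  have h1 := L.toSys.erase_le hJ hbd heJ hj
  have h2 := (L.nbr hb).2
  omega

lemma bd_apply_t (L : Low p q M T R h t N Ft) {J : Finset E} (hJ : J ⊆ M) :
    bd p q J t = ((J ∩ star p q M t).card : ZMod 2) := by
  rw [bd_apply_eq_card fun e he => L.loopless (hJ he)]
  congr 2
  ext e
  simp only [star, Finset.mem_filter, Finset.mem_inter]
  exact ⟨fun h => ⟨h.1, hJ h.1, h.2⟩, fun h => ⟨h.1, h.2.2⟩⟩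

lemma T_t (L : Low p q M T R h t N Ft) : T t = 1 := by
  have h1 := L.bd_apply_t L.hFt
  rw [L.inter_star_t L.hFt L.hbd L.hcard, L.hbd] at h1
  simp only [Finsupp.add_apply, Finsupp.single_eq_same, Finset.card_empty, Nat.cast_zero] at h1
  generalize T t = x at h1 ⊢
  revert x; decide

/-- A join for a vertex other than `t` contains an edge at `t`. -/
lemma exists_star (L : Low p q M T R h t N Ft) {v : V} (hv : v ≠ t) {J : Finset E} (hJ : J ⊆ M)
    (hbd : bd p q J = T + Finsupp.single v 1) : 1 ≤ (J ∩ star p q M t).card := by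
  by_contra hcon
  have h1 := L.bd_apply_t hJ
  have h2 : (J ∩ star p q M t).card = 0 := by omega
  rw [h2, hbd] at h1
  simp [L.T_t, hv] at h1

lemma N_nonempty (L : Low p q M T R h t N Ft) {u : V} (hu : u ∈ R) (hut : u ≠ t) :
    N.Nonempty := by
  obtain ⟨J, hJ, hbd, -⟩ := L.att u hu
  obtain ⟨e, he⟩ := Finset.card_pos.1 (L.exists_star hut hJ hbd)
  obtain ⟨b, hb, -⟩ := L.mem_star (Finset.mem_inter.1 he).2
  exact ⟨b, hb⟩

/-- Adding to `Ft ∆ Q` an edge from `t` to `b` gives a join for the other end of `Q`. -/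
lemma attach (L : Low p q M T R h t N Ft) {Q : Finset E} (hQ : Q ⊆ M) {b v : V} (hb : b ∈ N)
    (hv : v ∈ R) (hbd : bd p q Q = Finsupp.single b 1 + Finsupp.single v 1) :
    h v ≤ h t + wt Ft Q + 1 := by
  obtain ⟨e, he, hj⟩ := (L.hN b).1 hb
  have hs : symmDiff Ft Q ⊆ M := symmDiff_le_sup.trans (sup_le L.hFt hQ)
  have h1 := L.lb v hv (symmDiff (symmDiff Ft Q) {e})
    (symmDiff_le_sup.trans (sup_le hs (Finset.singleton_subset_iff.2 he)))
    (by
      rw [bd_symmDiff, bd_symmDiff, hbd, L.hbd, bd_singleton hj]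
      have h1 := add_self_finsupp (Finsupp.single b (1 : ZMod 2))
      have h2 := add_self_finsupp (Finsupp.single t (1 : ZMod 2))
      calc _ = T + Finsupp.single v 1 + (Finsupp.single b 1 + Finsupp.single b 1)
              + (Finsupp.single t 1 + Finsupp.single t 1) := by abel
        _ = _ := by rw [h1, h2, add_zero, add_zero])
  have h2 := card_symmDiff_wt Ft Q
  have h3 := card_symmDiff_wt (symmDiff Ft Q) {e}
  have h4 := wt_le_card (symmDiff Ft Q) {e}
  simp only [Finset.card_singleton] at h4
  have := L.hcard
  omega

/-- Edge sets whose odd vertices are all neighbours of `t` have nonnegative weight: they decompose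
into cycles and connections between two neighbours. -/
lemma wt_nonneg_of_bd (L : Low p q M T R h t N Ft) (Z : Finset E) : Z ⊆ M →
    (∀ u, u ∉ N → bd p q Z u = 0) → 0 ≤ wt Ft Z := by
  induction Z using Finset.strongInduction with
  | H Z ih =>
  intro hZ hbd
  by_cases h0 : bd p q Z = 0
  · exact L.toSys.wt_cycle L.ht L.hFt L.hbd L.hcard hZ h0
  obtain ⟨b, hb⟩ := Finsupp.ne_iff.1 h0
  have hb1 := zmod2_ne_zero hb
  have hmem : ∀ u, bd p q Z u = 1 → u ∈ N := fun u hu => by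
    by_contra hcon; rw [hbd u hcon] at hu; exact zero_ne_one hu
  obtain ⟨b', hne, hb', ⟨Q, hQ, hQbd⟩, -⟩ := exists_subset_bd p q Z b hb1
  have hbN := hmem b hb1
  have hb'N := hmem b' hb'
  have h1 := L.attach (hQ.trans hZ) hbN (L.nbr hb'N).1 hQbd
  have h2 := (L.nbr hb'N).2
  have hQne : Q.Nonempty := by
    rw [Finset.nonempty_iff_ne_empty]
    rintro rfl
    have := DFunLike.congr_fun hQbd b
    simp [bd, hne] at this
  have h3 := ih (Z \ Q) (Finset.sdiff_ssubset hQ hQne) (Finset.sdiff_subset.trans hZ) (by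
    intro u hu
    rw [bd_sdiff p q hQ, hQbd]
    have h4 : b ≠ u := by rintro rfl; exact hu hbN
    have h5 : b' ≠ u := by rintro rfl; exact hu hb'N
    simp [hbd u hu, h4.symm, h5.symm])
  have h6 := wt_sdiff Ft hQ
  omega

/-- The lower bound for joins in the contracted system. -/
lemma contr_lb (L : Low p q M T R h t N Ft) {v : V} (hv : v ∈ R) (hvN : v ∉ N) {J : Finset E}
    (hJ : J ⊆ M \ star p q M t)
    (hbd : bd (fun e => contr N t (p e)) (fun e => contr N t (q e)) J
      = T.mapDomain (contr N t) + Finsupp.single v 1) : lowH h t v ≤ J.card := by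
  have hJM : J ⊆ M := hJ.trans Finset.sdiff_subset
  set Z := symmDiff Ft J with hZdef
  have hZM : Z ⊆ M := symmDiff_le_sup.trans (sup_le L.hFt hJM)
  have hZJ : symmDiff Ft Z = J := by rw [hZdef, symmDiff_symmDiff_cancel_left]
  have hcard := card_symmDiff_wt Ft Z
  rw [hZJ, L.hcard] at hcard
  have hft : contr N t t = t := by simp [contr]
  have hmap : (bd p q Z).mapDomain (contr N t) = Finsupp.single v 1 + Finsupp.single t 1 := by
    rw [← bd_comp, hZdef, bd_symmDiff, hbd, bd_comp, L.hbd, Finsupp.mapDomain_add,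
      Finsupp.mapDomain_single, hft]
    have h1 := add_self_finsupp (T.mapDomain (contr N t))
    calc _ = Finsupp.single v 1 + Finsupp.single t 1 +
          (T.mapDomain (contr N t) + T.mapDomain (contr N t)) := by abel
      _ = _ := by rw [h1, add_zero]
  have hZt : bd p q Z t = 0 := by
    have hJ0 : J ∩ star p q M t = ∅ := by
      rw [Finset.eq_empty_iff_forall_notMem]
      intro e he
      exact (Finset.mem_sdiff.1 (hJ (Finset.mem_inter.1 he).1)).2 (Finset.mem_inter.1 he).2
    rw [hZdef, bd_symmDiff, Finsupp.add_apply, L.bd_apply_t L.hFt, L.bd_apply_t hJM, hJ0,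
      L.inter_star_t L.hFt L.hbd L.hcard]
    simp
  have hZu : ∀ u, u ∉ N → u ≠ t → bd p q Z u = (Finsupp.single v 1 : V →₀ ZMod 2) u := by
    intro u hu hut
    rw [← mapDomain_contr_apply hu hut, hmap]
    simp [hut]
  by_cases hvt : v = t
  · subst hvt
    have := L.wt_nonneg_of_bd Z hZM (by
      intro u hu
      by_cases huv : u = v
      · rw [huv]; exact hZt
      · rw [hZu u hu huv]; simp [huv])
    simp only [lowH, if_true]
    omega
  · have hv1 : bd p q Z v = 1 := by rw [hZu v hvN hvt]; simp
    obtain ⟨b, hbv, hb1, ⟨Q, hQ, hQbd⟩, -⟩ := exists_subset_bd p q Z v hv1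
    have hbt : b ≠ t := by rintro rfl; rw [hZt] at hb1; exact zero_ne_one hb1
    have hbN : b ∈ N := by
      by_contra hcon
      rw [hZu b hcon hbt] at hb1
      simp [hbv] at hb1
    have h1 := L.attach (hQ.trans hZM) hbN hv (by rw [hQbd, add_comm])
    have h2 := L.wt_nonneg_of_bd (Z \ Q) (Finset.sdiff_subset.trans hZM) (by
      intro u hu
      have hub : u ≠ b := by rintro rfl; exact hu hbN
      rw [bd_sdiff p q hQ, hQbd]
      by_cases hut : u = t
      · subst hut
        simp [hZt, Ne.symm hvt, hub]
      · rw [Finsupp.add_apply, hZu u hu hut]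
        simp only [Finsupp.add_apply]
        rw [Finsupp.single_eq_of_ne hub, add_zero]
        exact CharTwo.add_self_eq_zero _)
    have h3 := wt_sdiff Ft hQ
    simp only [lowH, hvt, if_false]
    omega

lemma contr_mem (L : Low p q M T R h t N Ft) {v : V} (hv : v ∈ R) :
    contr N t v ∈ R ∧ contr N t v ∉ N := by
  unfold contr
  split_ifs with h1
  · exact ⟨L.ht, L.t_notMem⟩
  · exact ⟨hv, h1⟩

lemma lowH_contr (L : Low p q M T R h t N Ft) {v : V} (hvt : v ≠ t) :
    lowH h t (contr N t v) = h v - 1 := by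
  unfold contr
  split_ifs with h1
  · have := (L.nbr h1).2
    simp only [lowH, if_true]
    omega
  · simp [lowH, hvt]

lemma lowH_t {h : V → ℤ} {t : V} {N : Finset V} : lowH h t (contr N t t) = h t := by
  simp [contr, lowH]

lemma contr_star (L : Low p q M T R h t N Ft) {e : E} (he : e ∈ star p q M t) :
    contr N t (p e) = t ∧ contr N t (q e) = t := by
  obtain ⟨b, hb, hj⟩ := L.mem_star he
  rcases hj with ⟨h1, h2⟩ | ⟨h1, h2⟩ <;> simp [h1, h2, contr, hb]

/-- Edges at `t` do not contribute to the boundary in the contracted system. -/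
lemma bd_contr (L : Low p q M T R h t N Ft) (J : Finset E) :
    bd (fun e => contr N t (p e)) (fun e => contr N t (q e)) (J \ star p q M t)
      = (bd p q J).mapDomain (contr N t) := by
  have h1 : bd (fun e => contr N t (p e)) (fun e => contr N t (q e)) (J ∩ star p q M t) = 0 := by
    rw [bd]
    apply Finset.sum_eq_zero
    intro e he
    have h2 := L.contr_star (Finset.mem_inter.1 he).2
    rw [h2.1, h2.2, add_self_finsupp]
  rw [← bd_comp, ← Finset.sdiff_inter_self_left, bd_sdiff _ _ Finset.inter_subset_left, h1,
    add_zero]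

/-- A minimum join has at most one edge at `t`, and stays minimum after the contraction. -/
lemma contr_min (L : Low p q M T R h t N Ft) {v : V} (hv : v ∈ R) {J : Finset E} (hJ : J ⊆ M)
    (hbd : bd p q J = T + Finsupp.single v 1) (hc : (J.card : ℤ) = h v) :
    (J ∩ star p q M t).card ≤ 1 ∧
      bd (fun e => contr N t (p e)) (fun e => contr N t (q e)) (J \ star p q M t)
        = T.mapDomain (contr N t) + Finsupp.single (contr N t v) 1 ∧
      ((J \ star p q M t).card : ℤ) = lowH h t (contr N t v) := by
  have h1 : bd (fun e => contr N t (p e)) (fun e => contr N t (q e)) (J \ star p q M t)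
      = T.mapDomain (contr N t) + Finsupp.single (contr N t v) 1 := by
    rw [L.bd_contr, hbd, Finsupp.mapDomain_add, Finsupp.mapDomain_single]
  have h2 := Finset.card_sdiff_add_card_inter J (star p q M t)
  by_cases hvt : v = t
  · subst hvt
    have h3 := L.inter_star_t hJ hbd hc
    rw [h3, Finset.card_empty] at h2
    refine ⟨by simp [h3], h1, ?_⟩
    rw [lowH_t]; omega
  · obtain ⟨h3, h4⟩ := L.contr_mem hv
    have h5 := L.contr_lb h3 h4 (Finset.sdiff_subset_sdiff hJ subset_rfl) h1
    have h6 := L.exists_star hvt hJ hbd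
    rw [L.lowH_contr hvt] at h5 ⊢
    exact ⟨by omega, h1, by omega⟩

lemma ne_t (_L : Low p q M T R h t N Ft) {e : E} (he : e ∈ M \ star p q M t) :
    e ∈ M ∧ p e ≠ t ∧ q e ≠ t := by
  obtain ⟨h1, h2⟩ := Finset.mem_sdiff.1 he
  simp only [star, Finset.mem_filter, not_and, not_or] at h2
  exact ⟨h1, h2 h1⟩

/-- Contracting the closed neighbourhood of `t` gives a system again. -/
lemma contr_sys (L : Low p q M T R h t N Ft) :
    Sys (fun e => contr N t (p e)) (fun e => contr N t (q e)) (M \ star p q M t)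
      (T.mapDomain (contr N t)) (R \ N) (lowH h t) where
  ends e he := by
    have h1 := L.ends e (L.ne_t he).1
    exact ⟨Finset.mem_sdiff.2 (L.contr_mem h1.1), Finset.mem_sdiff.2 (L.contr_mem h1.2)⟩
  par e he := by
    obtain ⟨h1, h2, h3⟩ := L.ne_t he
    have := L.par e h1
    rw [L.lowH_contr h2, L.lowH_contr h3]
    omega
  att v hv := by
    obtain ⟨h1, h2⟩ := Finset.mem_sdiff.1 hv
    obtain ⟨J, hJ, hbd, hc⟩ := L.att v h1
    have h3 := L.contr_min h1 hJ hbd hc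
    have h4 : contr N t v = v := by simp [contr, h2]
    rw [h4] at h3
    exact ⟨_, Finset.sdiff_subset_sdiff hJ subset_rfl, h3.2⟩
  lb v hv J hJ hbd := by
    obtain ⟨h1, h2⟩ := Finset.mem_sdiff.1 hv
    exact L.contr_lb h1 h2 hJ hbd

lemma contr_conn (L : Low p q M T R h t N Ft) {ℓ : ℤ} (hℓ : h t + 1 ≤ ℓ) {a b : V}
    (hc : Conn p q M h ℓ a b) :
    Conn (fun e => contr N t (p e)) (fun e => contr N t (q e)) (M \ star p q M t) (lowH h t)
      (ℓ - 1) (contr N t a) (contr N t b) := by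
  have hle : ∀ v, h v ≤ ℓ → lowH h t (contr N t v) ≤ ℓ - 1 := by
    intro v hv
    by_cases hvt : v = t
    · subst hvt; rw [lowH_t]; omega
    · rw [L.lowH_contr hvt]; omega
  refine ⟨hle a hc.1, hle b hc.2.1, fun S haS hbS => ?_⟩
  obtain ⟨e, he, h1, h2, h3⟩ := hc.2.2 (contr N t ⁻¹' S) haS hbS
  refine ⟨e, ?_, hle _ h1, hle _ h2, h3⟩
  rw [Finset.mem_sdiff]
  refine ⟨he, fun hs => ?_⟩
  have h4 := L.contr_star hs
  simp only [Set.mem_preimage, h4.1, h4.2] at h3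
  tauto

/-- At the lowest level the connectivity relation is trivial. -/
lemma conn_eq (L : Low p q M T R h t N Ft) {ℓ : ℤ} (hℓ : ℓ ≤ h t) {a b : V}
    (hc : Conn p q M h ℓ a b) : a = b := by
  by_contra hne
  obtain ⟨e, he, h1, h2, -⟩ := hc.2.2 {a} rfl (Ne.symm hne)
  have h3 := L.hmin _ (L.ends e he).1
  have h4 := L.hmin _ (L.ends e he).2
  exact L.par e he (by omega)

end Low

/-- The two consequences of Sebő's structure theory that are used below. If the `ℓ`-level component
of the root `r` meets an edge of a minimum join `F` for `r`, then both ends of the edge have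
potential at most `ℓ`. And if two vertices of potential exactly `ℓ` lie in the same component of
the `ℓ`-th level set, then the connections between them have nonnegative `F`-weight. The proof is
by induction, contracting the closed neighbourhood of a vertex of lowest potential. -/
theorem Sys.main (n : ℕ) : ∀ (p q : E → V) (M : Finset E) (T : V →₀ ZMod 2) (R : Finset V)
    (h : V → ℤ), Sys p q M T R h → R.card = n →
    ∀ (r : V) (F : Finset E) (ℓ : ℤ), r ∈ R → F ⊆ M → bd p q F = T + Finsupp.single r 1 →
      (F.card : ℤ) = h r →
      (∀ e ∈ F, ∀ x y, Joins p q e x y → Conn p q M h ℓ r x → h y ≤ ℓ) ∧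
      (∀ Q ⊆ M, ∀ y ∈ R, ∀ v ∈ R, bd p q Q = Finsupp.single y 1 + Finsupp.single v 1 →
        h y = ℓ → h v = ℓ → Conn p q M h ℓ y v → 0 ≤ wt F Q) := by
  classical
  induction n using Nat.strong_induction_on with
  | _ n ih =>
  intro p q M T R h H hR r F ℓ hr hF hFbd hFc
  obtain ⟨t, ht, hmin⟩ := Finset.exists_min_image R h ⟨r, hr⟩
  obtain ⟨Ft, hFt, hFtbd, hFtc⟩ := H.att t ht
  have L : Low p q M T R h t (R.filter fun v => ∃ e ∈ M, Joins p q e t v) Ft :=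
    { toSys := H, ht := ht, hmin := hmin, hFt := hFt, hbd := hFtbd, hcard := hFtc
      hN := fun v => by
        rw [Finset.mem_filter]
        exact ⟨fun h => h.2, fun ⟨e, he, hj⟩ => ⟨(H.joins_facts he hj).2.1, e, he, hj⟩⟩ }
  generalize (R.filter fun v => ∃ e ∈ M, Joins p q e t v) = N at L
  by_cases hℓ : ℓ ≤ h t
  · constructor
    · intro e he x y hj hc
      have hx := L.conn_eq hℓ hc
      subst hx
      have h1 := H.erase_le hF hFbd he hj
      have h2 := hc.1
      omega
    · intro Q hQ y hy v hv hQbd _ _ hc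
      have hx := L.conn_eq hℓ hc
      subst hx
      rw [add_self_finsupp] at hQbd
      exact H.wt_cycle hr hF hFbd hFc hQ hQbd
  replace hℓ : h t + 1 ≤ ℓ := by omega
  have hcardlt : ∀ u ∈ R, u ≠ t → (R \ N).card < n := by
    intro u hu hut
    obtain ⟨b, hb⟩ := L.N_nonempty hu hut
    rw [← hR]
    exact Finset.card_lt_card (Finset.ssubset_iff_subset_ne.2 ⟨Finset.sdiff_subset, fun heq => by
      have := (L.nbr hb).1
      rw [← heq] at this
      exact (Finset.mem_sdiff.1 this).2 hb⟩)
  obtain ⟨hF1, hF2, hF3⟩ := L.contr_min hr hF hFbd hFc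
  have hr' := Finset.mem_sdiff.2 (L.contr_mem hr)
  have hFsub : F \ star p q M t ⊆ M \ star p q M t := Finset.sdiff_subset_sdiff hF subset_rfl
  constructor
  · intro e he x y hj hc
    by_cases hes : e ∈ star p q M t
    · have h1 : h (p e) ≤ h t + 1 ∧ h (q e) ≤ h t + 1 := by
        obtain ⟨b, hb, hj'⟩ := L.mem_star hes
        have := (L.nbr hb).2
        rcases hj' with ⟨h1, h2⟩ | ⟨h1, h2⟩ <;> rw [h1, h2] <;> omega
      rcases hj with ⟨-, rfl⟩ | ⟨rfl, -⟩ <;> omega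
    · have he' : e ∈ M \ star p q M t := Finset.mem_sdiff.2 ⟨hF he, hes⟩
      obtain ⟨h1, h2, h3⟩ := L.ne_t he'
      have hyt : y ≠ t := by rcases hj with ⟨-, rfl⟩ | ⟨rfl, -⟩ <;> assumption
      have hyR := (H.joins_facts h1 hj).2.1
      have h4 := (ih _ (hcardlt y hyR hyt) _ _ _ _ _ _ L.contr_sys rfl _ _ (ℓ - 1) hr' hFsub hF2
        hF3).1 e (Finset.mem_sdiff.2 ⟨he, hes⟩) (contr N t x) (contr N t y)
        (by rcases hj with ⟨rfl, rfl⟩ | ⟨rfl, rfl⟩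
            · exact Or.inl ⟨rfl, rfl⟩
            · exact Or.inr ⟨rfl, rfl⟩) (L.contr_conn hℓ hc)
      rw [L.lowH_contr hyt] at h4
      omega
  · intro Q hQ y hy v hv hQbd hhy hhv hc
    have hyt : y ≠ t := by rintro rfl; omega
    have hvt : v ≠ t := by rintro rfl; omega
    have h4 := (ih _ (hcardlt y hy hyt) _ _ _ _ _ _ L.contr_sys rfl _ _ (ℓ - 1) hr' hFsub hF2
        hF3).2 (Q \ star p q M t) (Finset.sdiff_subset_sdiff hQ subset_rfl)
        (contr N t y) (Finset.mem_sdiff.2 (L.contr_mem hy))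
        (contr N t v) (Finset.mem_sdiff.2 (L.contr_mem hv))
        (by rw [L.bd_contr, hQbd, Finsupp.mapDomain_add, Finsupp.mapDomain_single,
          Finsupp.mapDomain_single])
        (by rw [L.lowH_contr hyt, hhy]) (by rw [L.lowH_contr hvt, hhv]) (L.contr_conn hℓ hc)
    have h5 : wt (F \ star p q M t) (Q \ star p q M t) = wt F (Q \ star p q M t) := by
      unfold wt
      refine Finset.sum_congr rfl fun e he => ?_
      simp [(Finset.mem_sdiff.1 he).2]
    have h6 := wt_sdiff F (Finset.inter_subset_left : Q ∩ star p q M t ⊆ Q)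
    rw [Finset.sdiff_inter_self_left] at h6
    have h7 : 0 ≤ wt F (Q ∩ star p q M t) := by
      apply wt_nonneg_of_even
      · have h8 := L.bd_apply_t hQ
        rw [hQbd] at h8
        simp only [Finsupp.add_apply, Finsupp.single_eq_of_ne hyt.symm,
          Finsupp.single_eq_of_ne hvt.symm, add_zero] at h8
        exact (ZMod.natCast_eq_zero_iff_even).1 h8.symm
      · refine le_trans (Finset.card_le_card ?_) hF1
        intro e he
        simp only [Finset.mem_inter] at he ⊢
        exact ⟨he.1, he.2.2⟩
    omega

end Multigraph

/-! ### Joins and distances in a bipartite graft -/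

section Graph

set_option linter.unusedSectionVars false

variable {G : SimpleGraph V}

/-- A choice of an end for every unordered pair. -/
noncomputable def fstEnd (e : Sym2 V) : V := (Quot.out e).1

/-- The end not chosen by `fstEnd`. -/
noncomputable def sndEnd (e : Sym2 V) : V := (Quot.out e).2

lemma mk_ends (e : Sym2 V) : s(fstEnd e, sndEnd e) = e := Quot.out_eq e

lemma joins_mk (a b : V) : Joins fstEnd sndEnd s(a, b) a b := Sym2.eq_iff.1 (mk_ends s(a, b))

lemma Joins.eq_mk {e : Sym2 V} {a b : V} (h : Joins fstEnd sndEnd e a b) : e = s(a, b) := by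
  rw [← mk_ends e]; exact Sym2.eq_iff.2 h

lemma ends_adj {e : Sym2 V} (he : e ∈ G.edgeSet) : G.Adj (fstEnd e) (sndEnd e) := by
  rw [← SimpleGraph.mem_edgeSet, mk_ends]; exact he

section

variable [DecidableEq V]

lemma odd_ncard_iff {J : Finset (Sym2 V)} (hJ : (J : Set (Sym2 V)) ⊆ G.edgeSet) (v : V) :
    Odd ({e ∈ (J : Set (Sym2 V)) | v ∈ e}).ncard ↔ bd fstEnd sndEnd J v = 1 := by
  have h1 : {e ∈ (J : Set (Sym2 V)) | v ∈ e} = (star fstEnd sndEnd J v : Set (Sym2 V)) := by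
    ext e
    have : v ∈ e ↔ fstEnd e = v ∨ sndEnd e = v := by
      conv_lhs => rw [← mk_ends e, Sym2.mem_iff]
      simp only [eq_comm]
    simp [star, this]
  rw [h1, Set.ncard_coe_finset, bd_apply_eq_card fun e he => (ends_adj (hJ he)).ne,
    ZMod.natCast_eq_one_iff_odd]

/-- A finite edge set `F` of a bipartite graph without negative cycles; the latter property
characterizes minimum joins. -/
structure Cons (G : SimpleGraph V) (F : Finset (Sym2 V)) : Prop where
  col : G.Colorable 2
  sub : (F : Set (Sym2 V)) ⊆ G.edgeSet
  nonneg : ∀ Z : Finset (Sym2 V), (Z : Set (Sym2 V)) ⊆ G.edgeSet → bd fstEnd sndEnd Z = 0 →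
    0 ≤ wt F Z

lemma IsMinJoin.cons {T : Set V} {F : Finset (Sym2 V)} (hcol : G.Colorable 2)
    (hF : IsMinJoin G T F) : Cons G F where
  col := hcol
  sub := hF.1.1
  nonneg Z hZ hbd := by
    have hs : ((symmDiff F Z : Finset (Sym2 V)) : Set (Sym2 V)) ⊆ G.edgeSet := by
      intro e he
      rcases Finset.mem_symmDiff.1 (Finset.mem_coe.1 he) with h | h
      · exact hF.1.1 h.1
      · exact hZ h.1
    have hj : IsJoin G T (symmDiff F Z : Finset (Sym2 V)) := by
      refine ⟨hs, fun v => ?_⟩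
      rw [← hF.1.2 v, odd_ncard_iff hs, odd_ncard_iff hF.1.1, bd_symmDiff, hbd, add_zero]
    have h1 : nu G T ≤ (symmDiff F Z).card := Nat.sInf_le ⟨_, hj, Set.ncard_coe_finset _⟩
    have h2 := hF.2
    rw [Set.ncard_coe_finset] at h2
    have h3 := card_symmDiff_wt F Z
    omega

lemma bd_edges {a b : V} {w : G.Walk a b} (hw : w.IsTrail) :
    bd fstEnd sndEnd w.edges.toFinset = Finsupp.single a 1 + Finsupp.single b 1 := by
  induction w with
  | nil => rw [add_self_finsupp]; simp [bd]
  | @cons u v w hadj w' ih =>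
    rw [Walk.isTrail_cons] at hw
    have h1 : (Walk.cons hadj w').edges.toFinset = {s(u, v)} ∪ w'.edges.toFinset := by
      ext; simp
    rw [h1, bd_disjUnion, bd_singleton (joins_mk u v), ih hw.1]
    · calc _ = Finsupp.single u 1 + Finsupp.single w 1 +
            (Finsupp.single v 1 + Finsupp.single v (1 : ZMod 2)) := by abel
        _ = _ := by rw [add_self_finsupp, add_zero]
    · simpa using hw.2

lemma walkWt_eq (F : Finset (Sym2 V)) {a b : V} {w : G.Walk a b} (hw : w.IsTrail) :
    walkWt (F : Set (Sym2 V)) w = wt F w.edges.toFinset := by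
  rw [wt, List.sum_toFinset _ hw.edges_nodup, walkWt]
  congr 2
  funext e
  simp [edgeWt]

lemma coe_edges_subset {a b : V} (w : G.Walk a b) :
    ((w.edges.toFinset : Finset (Sym2 V)) : Set (Sym2 V)) ⊆ G.edgeSet := by
  intro e he
  exact w.edges_subset_edgeSet (by simpa using he)

lemma neg_card_le_wt (F J : Finset (Sym2 V)) : -(F.card : ℤ) ≤ wt F J := by
  have := card_symmDiff_wt F J
  omega

lemma dist_bddBelow (F : Finset (Sym2 V)) (a b : V) :
    BddBelow {n : ℤ | ∃ p : G.Walk a b, p.IsPath ∧ walkWt (F : Set (Sym2 V)) p = n} := by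
  refine ⟨-(F.card : ℤ), ?_⟩
  rintro n ⟨p, hp, rfl⟩
  rw [walkWt_eq F hp.isTrail]
  exact neg_card_le_wt F _

lemma dist_le (F : Finset (Sym2 V)) {a b : V} {w : G.Walk a b} (hw : w.IsPath) :
    distF G F a b ≤ walkWt (F : Set (Sym2 V)) w :=
  csInf_le (dist_bddBelow F a b) ⟨w, hw, rfl⟩

lemma exists_dist (F : Finset (Sym2 V)) {a b : V} (h : G.Reachable a b) :
    ∃ w : G.Walk a b, w.IsPath ∧ walkWt (F : Set (Sym2 V)) w = distF G F a b := by
  obtain ⟨w, hw⟩ := h.exists_isPath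
  have hne : {n : ℤ | ∃ p : G.Walk a b, p.IsPath ∧ walkWt (F : Set (Sym2 V)) p = n}.Nonempty :=
    ⟨_, w, hw, rfl⟩
  exact Int.csInf_mem hne (dist_bddBelow F a b)

lemma dist_of_not_reachable (F : Finset (Sym2 V)) {a b : V} (h : ¬ G.Reachable a b) :
    distF G F a b = 0 := by
  have : {n : ℤ | ∃ p : G.Walk a b, p.IsPath ∧ walkWt (F : Set (Sym2 V)) p = n} = ∅ := by
    ext n
    simp only [Set.mem_ofPred_eq, Set.mem_empty_iff_false, iff_false]
    rintro ⟨p, -⟩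
    exact h ⟨p⟩
  rw [distF, this]
  exact Int.csInf_empty

lemma even_walkWt (F : Finset (Sym2 V)) {a b : V} (w : G.Walk a b) :
    Even (walkWt (F : Set (Sym2 V)) w) ↔ Even w.length := by
  induction w with
  | nil => simp [walkWt]
  | @cons u v w hadj w' ih =>
    have h1 : walkWt (F : Set (Sym2 V)) (Walk.cons hadj w')
        = edgeWt F s(u, v) + walkWt (F : Set (Sym2 V)) w' := by simp [walkWt]
    have h2 : ¬ Even (edgeWt (F : Set (Sym2 V)) s(u, v)) := by
      unfold edgeWt; split_ifs <;> decide
    rw [h1, Walk.length_cons, Int.even_add, Nat.even_add_one, ih]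
    tauto

lemma exists_walk_of_chain {J : Finset (Sym2 V)} (hJ : (J : Set (Sym2 V)) ⊆ G.edgeSet) {a b : V}
    (h : Relation.ReflTransGen (fun u w => ∃ e ∈ J, Joins fstEnd sndEnd e u w) a b) :
    ∃ w : G.Walk a b, ∀ e ∈ w.edges, e ∈ J := by
  induction h with
  | refl => exact ⟨Walk.nil, by simp⟩
  | @tail b c _ h1 ih =>
    obtain ⟨w, hw⟩ := ih
    obtain ⟨e, he, hj⟩ := h1
    obtain rfl := hj.eq_mk
    have hadj : G.Adj b c := hJ he
    refine ⟨w.concat hadj, fun e' he' => ?_⟩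
    rw [Walk.edges_concat, List.concat_eq_append, List.mem_append, List.mem_singleton] at he'
    rcases he' with h | rfl
    · exact hw _ h
    · exact he

namespace Cons

variable {F : Finset (Sym2 V)}

lemma dist_self (B : Cons G F) (r : V) : distF G F r r = 0 := by
  have h1 := dist_le F (Walk.IsPath.nil : (Walk.nil : G.Walk r r).IsPath)
  obtain ⟨w, hw, hw'⟩ := exists_dist F (Reachable.refl (G := G) r)
  have h2 := B.nonneg _ (coe_edges_subset w) (by rw [bd_edges hw.isTrail, add_self_finsupp])
  rw [← walkWt_eq F hw.isTrail, hw'] at h2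
  simp only [walkWt, Walk.edges_nil, List.map_nil, List.sum_nil] at h1
  omega

/-- The distance bounds the weight of every edge set with the boundary of a path. -/
lemma dist_le_wt (B : Cons G F) {J : Finset (Sym2 V)} (hJ : (J : Set (Sym2 V)) ⊆ G.edgeSet)
    {a b : V} (hbd : bd fstEnd sndEnd J = Finsupp.single a 1 + Finsupp.single b 1) :
    distF G F a b ≤ wt F J := by
  by_cases hab : a = b
  · subst hab
    rw [B.dist_self]
    exact B.nonneg J hJ (by rw [hbd, add_self_finsupp])
  obtain ⟨b', hb'a, hb', -, hch⟩ := exists_subset_bd fstEnd sndEnd J a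
    (by rw [hbd]; simp [hab])
  have hbb : b' = b := by
    by_contra hne
    rw [hbd] at hb'
    simp [hb'a, hne] at hb'
  subst hbb
  obtain ⟨w, hw⟩ := exists_walk_of_chain hJ hch
  have hsub : w.bypass.edges.toFinset ⊆ J := by
    intro e he
    exact hw e (w.edges_bypass_subset_edges (by simpa using he))
  have hp := w.bypass_isPath
  have h1 := B.nonneg (J \ w.bypass.edges.toFinset)
    (fun e he => hJ (Finset.sdiff_subset (Finset.mem_coe.1 he)))
    (by rw [bd_sdiff _ _ hsub, hbd, bd_edges hp.isTrail, add_self_finsupp])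
  have h2 := wt_sdiff F hsub
  have h3 := dist_le F hp
  rw [walkWt_eq F hp.isTrail] at h3
  omega

/-- Bipartiteness separates the distances of adjacent vertices. -/
lemma dist_ne (B : Cons G F) {r u v : V} (hu : G.Reachable r u) (huv : G.Adj u v) :
    distF G F r u ≠ distF G F r v := by
  intro heq
  obtain ⟨c0⟩ := B.col
  have c : G.Coloring Bool := G.recolorOfEquiv finTwoEquiv c0
  obtain ⟨w1, -, h1⟩ := exists_dist F hu
  obtain ⟨w2, -, h2⟩ := exists_dist F (hu.trans huv.reachable)
  have h3 := even_walkWt F w1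
  have h4 := even_walkWt F w2
  rw [h1, c.even_length_iff_congr] at h3
  rw [h2, c.even_length_iff_congr, ← heq, h3] at h4
  have h5 := c.valid huv
  revert h4 h5
  cases c r <;> cases c u <;> cases c v <;> simp

end Cons

end

/-- The edges of the connected component of `r`. -/
noncomputable def compEdges [Fintype V] (G : SimpleGraph V) (r : V) : Finset (Sym2 V) :=
  {e : Sym2 V | e ∈ G.edgeSet ∧ G.Reachable r (fstEnd e)}.toFinite.toFinset

/-- The vertices of the connected component of `r`. -/
noncomputable def compVerts [Fintype V] (G : SimpleGraph V) (r : V) : Finset V :=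
  {v : V | G.Reachable r v}.toFinite.toFinset

section

variable [Fintype V] [DecidableEq V]

lemma mem_compVerts {r v : V} : v ∈ compVerts G r ↔ G.Reachable r v := by simp [compVerts]

lemma mk_mem_compEdges {r a b : V} (hab : G.Adj a b) (ha : G.Reachable r a) :
    s(a, b) ∈ compEdges G r := by
  simp only [compEdges, Set.Finite.mem_toFinset, Set.mem_ofPred_eq, SimpleGraph.mem_edgeSet]
  refine ⟨hab, ?_⟩
  rcases joins_mk a b with ⟨h, -⟩ | ⟨h, -⟩ <;> rw [h]
  · exact ha
  · exact ha.trans hab.reachable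

lemma compEdges_sub {r : V} : (compEdges G r : Set (Sym2 V)) ⊆ G.edgeSet := by
  intro e he
  simp only [compEdges, Set.Finite.coe_toFinset, Set.mem_ofPred_eq] at he
  exact he.1

lemma edges_subset_compEdges {r a b : V} (ha : G.Reachable r a) (w : G.Walk a b) :
    w.edges.toFinset ⊆ compEdges G r := by
  induction w with
  | nil => simp
  | cons hadj w' ih =>
    intro e he
    simp only [Walk.edges_cons, List.toFinset_cons, Finset.mem_insert] at he
    rcases he with rfl | he
    · exact mk_mem_compEdges hadj ha
    · exact ih (ha.trans hadj.reachable) he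

lemma wt_inter (F : Finset (Sym2 V)) {M Z : Finset (Sym2 V)} (h : Z ⊆ M) :
    wt (F ∩ M) Z = wt F Z := by
  refine Finset.sum_congr rfl fun e he => ?_
  simp [h he]

namespace Cons

variable {F : Finset (Sym2 V)}

/-- The system of the root `r`: the edge set of its component, with the distance from `r`, shifted
by a constant, as the potential. -/
lemma sys (B : Cons G F) (r : V) :
    Sys fstEnd sndEnd (compEdges G r)
      (bd fstEnd sndEnd (F ∩ compEdges G r) + Finsupp.single r 1) (compVerts G r)
      (fun v => distF G F r v + (F ∩ compEdges G r).card) where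
  ends e he := by
    simp only [compEdges, Set.Finite.mem_toFinset, Set.mem_ofPred_eq] at he
    rw [mem_compVerts, mem_compVerts]
    exact ⟨he.2, he.2.trans (ends_adj he.1).reachable⟩
  par e he := by
    simp only [compEdges, Set.Finite.mem_toFinset, Set.mem_ofPred_eq] at he
    have := B.dist_ne he.2 (ends_adj he.1)
    intro h
    omega
  att v hv := by
    obtain ⟨w, hw, hwd⟩ := exists_dist F (mem_compVerts.1 hv)
    have h1 := edges_subset_compEdges (Reachable.refl r) w
    refine ⟨symmDiff (F ∩ compEdges G r) w.edges.toFinset,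
      symmDiff_le_sup.trans (sup_le Finset.inter_subset_right h1), ?_, ?_⟩
    · rw [bd_symmDiff, bd_edges hw.isTrail, add_assoc]
    · rw [card_symmDiff_wt, wt_inter F h1, ← walkWt_eq F hw.isTrail, hwd, add_comm]
  lb v hv J hJ hbd := by
    have h0 : symmDiff (F ∩ compEdges G r) J ⊆ compEdges G r :=
      symmDiff_le_sup.trans (sup_le Finset.inter_subset_right hJ)
    have h1 : distF G F r v ≤ wt F (symmDiff (F ∩ compEdges G r) J) :=
      B.dist_le_wt (fun e he => compEdges_sub (Finset.mem_coe.2 (h0 he))) (by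
        rw [bd_symmDiff, hbd]
        calc _ = Finsupp.single r 1 + Finsupp.single v 1 +
              (bd fstEnd sndEnd (F ∩ compEdges G r) + bd fstEnd sndEnd (F ∩ compEdges G r)) := by
                abel
          _ = _ := by rw [add_self_finsupp, add_zero])
    have h2 := card_symmDiff_wt (F ∩ compEdges G r) (symmDiff (F ∩ compEdges G r) J)
    rw [symmDiff_symmDiff_cancel_left, wt_inter F h0] at h2
    omega

end Cons

end

/-- A connected set leaving `S` does so along an edge. -/
lemma subset_of_connected {C S : Set V} (hC : (G.induce C).Connected) {x : V} (hx : x ∈ C)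
    (hxS : x ∈ S) (h : ∀ a ∈ C, a ∈ S → ∀ b ∈ C, G.Adj a b → b ∈ S) : C ⊆ S := by
  intro v hv
  obtain ⟨w⟩ := hC.preconnected ⟨x, hx⟩ ⟨v, hv⟩
  have key : ∀ (a b : C) (w : (G.induce C).Walk a b), (a : V) ∈ S → (b : V) ∈ S := by
    intro a b w
    induction w with
    | nil => exact id
    | @cons a c b hadj _ ih => exact fun ha => ih (h a a.2 ha c c.2 hadj)
  exact key _ _ w hxS

section

variable {M : Finset (Sym2 V)} {h : V → ℤ} {ℓ ℓ' : ℤ} {a b c : V} {p q : Sym2 V → V}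

lemma Conn.trans (h1 : Conn p q M h ℓ a b) (h2 : Conn p q M h ℓ b c) : Conn p q M h ℓ a c := by
  refine ⟨h1.1, h2.2.1, fun S ha hc => ?_⟩
  by_cases hb : b ∈ S
  · exact h2.2.2 S hb hc
  · exact h1.2.2 S ha hb

lemma Conn.mono (h1 : Conn p q M h ℓ a b) (hℓ : ℓ ≤ ℓ') : Conn p q M h ℓ' a b := by
  refine ⟨h1.1.trans hℓ, h1.2.1.trans hℓ, fun S ha hc => ?_⟩
  obtain ⟨e, he, h2, h3, h4⟩ := h1.2.2 S ha hc
  exact ⟨e, he, h2.trans hℓ, h3.trans hℓ, h4⟩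

lemma Conn.edge {e : Sym2 V} (he : e ∈ M) (hj : Joins p q e a b) (ha : h a ≤ ℓ) (hb : h b ≤ ℓ) :
    Conn p q M h ℓ a b := by
  refine ⟨ha, hb, fun S haS hbS => ⟨e, he, ?_⟩⟩
  rcases hj with ⟨rfl, rfl⟩ | ⟨rfl, rfl⟩ <;> exact ⟨by assumption, by assumption, by tauto⟩

end

/-! ### Decapital components at an edge of the join -/

variable [Fintype V] [DecidableEq V]

namespace Cons

variable {F : Finset (Sym2 V)}

lemma dist_step (B : Cons G F) {r u v : V} (hu : G.Reachable r u) (huv : G.Adj u v) :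
    distF G F r v ≤ distF G F r u + 1 := by
  have := (B.sys r).step (mk_mem_compEdges huv hu) (joins_mk u v)
  omega

lemma conn_of_connected {r : V} {i c : ℤ} {K : Set V} (hK : (G.induce K).Connected)
    (hKi : ∀ v ∈ K, distF G F r v ≤ i) (hKr : ∀ v ∈ K, G.Reachable r v) {a b : V} (ha : a ∈ K)
    (hb : b ∈ K) :
    Conn fstEnd sndEnd (compEdges G r) (fun v => distF G F r v + c) (i + c) a b := by
  have hle : ∀ v ∈ K, distF G F r v + c ≤ i + c := fun v hv => by
    have := hKi v hv
    omega
  refine ⟨hle a ha, hle b hb, fun S haS hbS => ?_⟩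
  by_contra hcon
  refine hbS (subset_of_connected hK ha haS (fun u hu huS v hv huv => ?_) hb)
  by_contra hvS
  refine hcon ⟨s(u, v), mk_mem_compEdges huv (hKr u hu), ?_⟩
  rcases joins_mk u v with ⟨h1, h2⟩ | ⟨h1, h2⟩ <;> rw [h1, h2]
  · exact ⟨hle u hu, hle v hv, by tauto⟩
  · exact ⟨hle v hv, hle u hu, by tauto⟩

/-- A decapital distance component containing exactly the end `x` of an edge `xy` of `F` is
described in terms of the distances from `y`: they are negative on it and nonnegative on its
neighbours. This makes it independent of the root `r`. -/
lemma decap (B : Cons G F) {x y r : V} (hxy : s(x, y) ∈ F) {K : Set V}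
    (hK : IsDecapDistComp G F r K) (hx : x ∈ K) (hy : y ∉ K) :
    (G.induce K).Connected ∧ (∀ v ∈ K, distF G F y v ≤ -1) ∧
      ∀ u ∈ K, ∀ v, v ∉ K → G.Adj u v → 0 ≤ distF G F y v := by
  obtain ⟨i, ⟨-, -, hsub, hconn, hclosed⟩, -⟩ := hK
  have hi : ∀ v ∈ K, distF G F r v ≤ i := fun v hv => hsub hv
  have hout : ∀ u ∈ K, ∀ v, v ∉ K → G.Adj u v → i < distF G F r v := by
    intro u hu v hv huv
    by_contra hcon
    exact hv (hclosed u hu v (not_lt.1 hcon) huv)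
  have hadj : G.Adj x y := B.sub hxy
  have hdy := hout x hx y hy hadj
  have hrx : G.Reachable r x := by
    by_contra hcon
    -- outside the component of `r` all distances have the junk value `0`
    have h1 := dist_of_not_reachable F hcon
    have h2 := dist_of_not_reachable F
      (fun h => hcon (h.trans hadj.symm.reachable) : ¬ G.Reachable r y)
    have := hi x hx
    omega
  have hKr : ∀ v ∈ K, G.Reachable r v :=
    subset_of_connected (S := {v | G.Reachable r v}) hconn hx hrx
      fun a _ ha b _ hab => ha.trans hab.reachable
  have hry := hrx.trans hadj.reachable
  have hxyM := mk_mem_compEdges hadj hrx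
  have hdxi := hi x hx
  have hdy' := B.dist_step hrx hadj
  have hS := B.sys r
  refine ⟨hconn, fun v hv => ?_, fun u hu v hv huv => ?_⟩
  · obtain ⟨w, hw, hwd⟩ := exists_dist F (hKr v hv)
    have hvi := hi v hv
    have hwM := edges_subset_compEdges (Reachable.refl r) w
    have hye : s(x, y) ∈ w.edges := by
      by_contra hcon
      -- otherwise `xy` lies in the minimum join `F ∆ w` for `v`
      have h1 := (Sys.main _ _ _ _ _ _ _ hS rfl v
        (symmDiff (F ∩ compEdges G r) w.edges.toFinset) (i + (F ∩ compEdges G r).card)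
        (mem_compVerts.2 (hKr v hv))
        (symmDiff_le_sup.trans (sup_le Finset.inter_subset_right hwM))
        (by rw [bd_symmDiff, bd_edges hw.isTrail, add_assoc])
        (by rw [card_symmDiff_wt, wt_inter F hwM, ← walkWt_eq F hw.isTrail, hwd, add_comm])).1
        s(x, y)
        (Finset.mem_symmDiff.2 (Or.inl ⟨Finset.mem_inter.2 ⟨hxy, hxyM⟩, by simpa using hcon⟩))
        x y (joins_mk x y) (conn_of_connected hconn hi hKr hv hx)
      omega
    have hys := w.snd_mem_support_of_mem_edges hye
    have h1 := dist_le F (hw.takeUntil hys)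
    have h2 := dist_le F (hw.dropUntil hys)
    have h3 : walkWt (F : Set (Sym2 V)) w = walkWt (F : Set (Sym2 V)) (w.takeUntil y hys)
        + walkWt (F : Set (Sym2 V)) (w.dropUntil y hys) := by
      conv_lhs => rw [← w.take_spec hys]
      simp only [walkWt, Walk.edges_append, List.map_append, List.sum_append]
    omega
  · have hdv := hout u hu v hv huv
    have hdv' := B.dist_step (hKr u hu) huv
    have hui := hi u hu
    have hrv := (hKr u hu).trans huv.reachable
    obtain ⟨w, hw, hwd⟩ := exists_dist F (hry.symm.trans hrv)
    have hwM := edges_subset_compEdges hry w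
    have h0 := B.dist_self r
    have hc1 := (conn_of_connected (c := ((F ∩ compEdges G r).card : ℤ)) hconn hi hKr hx hu).mono
      (ℓ' := i + 1 + (F ∩ compEdges G r).card) (by omega)
    have hc2 := ((Conn.edge hxyM (joins_mk x y).symm (by omega) hc1.1).trans hc1).trans
      (Conn.edge (mk_mem_compEdges huv (hKr u hu)) (joins_mk u v) hc1.2.1 (by omega))
    have h1 := (Sys.main _ _ _ _ _ _ _ hS rfl r (F ∩ compEdges G r)
      (i + 1 + (F ∩ compEdges G r).card) (mem_compVerts.2 (Reachable.refl r))
      Finset.inter_subset_right (by rw [add_assoc, add_self_finsupp, add_zero]) (by omega)).2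
      w.edges.toFinset hwM y (mem_compVerts.2 hry) v (mem_compVerts.2 hrv)
      (bd_edges hw.isTrail) (by omega) (by omega) hc2
    rw [wt_inter F hwM, ← walkWt_eq F hw.isTrail, hwd] at h1
    exact h1

/-- Two decapital distance components containing exactly the end `x` of `xy` are comparable. -/
lemma decap_subset (B : Cons G F) {x y r r' : V} (hxy : s(x, y) ∈ F) {K K' : Set V}
    (hK : IsDecapDistComp G F r K) (hx : x ∈ K) (hy : y ∉ K)
    (hK' : IsDecapDistComp G F r' K') (hx' : x ∈ K') (hy' : y ∉ K') : K ⊆ K' := by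
  obtain ⟨hc, hneg, -⟩ := B.decap hxy hK hx hy
  obtain ⟨-, -, hnn⟩ := B.decap hxy hK' hx' hy'
  refine subset_of_connected hc hx hx' fun a _ haK' b hb hab => ?_
  by_contra hcon
  have h1 := hneg b hb
  have h2 := hnn a haK' b hcon hab
  omega

lemma dist_edge (B : Cons G F) {x y : V} (hxy : s(x, y) ∈ F) : distF G F y x = -1 := by
  have hadj : G.Adj x y := B.sub hxy
  have hw : wt F {s(x, y)} = -1 := by simp [wt, hxy]
  have h1 := B.dist_le_wt (J := {s(x, y)}) (a := y) (b := x)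
    (by simpa using hadj) (bd_singleton (joins_mk x y).symm)
  obtain ⟨w, hw', hwd⟩ := exists_dist F hadj.symm.reachable
  have hbd := bd_edges hw'.isTrail
  have hE := coe_edges_subset w
  rw [walkWt_eq F hw'.isTrail] at hwd
  by_cases he : s(x, y) ∈ w.edges.toFinset
  · have hs := Finset.singleton_subset_iff.2 he
    have h2 := wt_sdiff F hs
    have h3 := B.nonneg (w.edges.toFinset \ {s(x, y)})
      (fun e he => hE (Finset.sdiff_subset (Finset.mem_coe.1 he)))
      (by rw [bd_sdiff _ _ hs, hbd, bd_singleton (joins_mk x y).symm, add_self_finsupp])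
    omega
  · have hd : Disjoint {s(x, y)} w.edges.toFinset := Finset.disjoint_singleton_left.2 he
    have h2 : wt F ({s(x, y)} ∪ w.edges.toFinset) = wt F {s(x, y)} + wt F w.edges.toFinset :=
      Finset.sum_union hd
    have h3 := B.nonneg ({s(x, y)} ∪ w.edges.toFinset)
      (by
        intro e he
        rcases Finset.mem_union.1 (Finset.mem_coe.1 he) with h | h
        · rw [Finset.mem_singleton.1 h]; exact hadj
        · exact hE h)
      (by rw [bd_disjUnion _ _ hd, hbd, bd_singleton (joins_mk x y).symm, add_self_finsupp])
    omega

/-- With the root `y` and the level `-1`, the distance component of `x` does not contain `y`. -/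
lemma exists_decap (B : Cons G F) {x y : V} (hxy : s(x, y) ∈ F) :
    ∃ K : Set V, IsDecapDistComp G F y K ∧ x ∈ K ∧ y ∉ K := by
  have hdx := B.dist_edge hxy
  have hdy := B.dist_self y
  set U : Set V := {v | distF G F y v ≤ -1} with hU
  have hxU : x ∈ U := hdx.le
  have hyU : y ∉ U := fun h => by
    have h : distF G F y y ≤ -1 := h
    omega
  let K : Set V := {v | ∃ w : G.Walk x v, ∀ u ∈ w.support, u ∈ U}
  have hxK : x ∈ K := ⟨Walk.nil, by simpa using hxU⟩
  have hKU : K ⊆ U := fun v ⟨w, hw⟩ => hw v w.end_mem_support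
  have hyK : y ∉ K := fun h => hyU (hKU h)
  refine ⟨K, ⟨-1, ⟨⟨x, hdx⟩, ⟨x, hxK⟩, hKU, ?_, ?_⟩, hyK⟩, hxK, hyK⟩
  · refine induce_connected_of_patches x hxK fun {v} ⟨w, hw⟩ => ?_
    refine ⟨{u | u ∈ w.support}, fun u hu => ?_, w.start_mem_support, w.end_mem_support,
      w.connected_induce_support.preconnected _ _⟩
    exact ⟨w.takeUntil u hu, fun z hz => hw z (w.support_takeUntil_subset_support hu hz)⟩
  · rintro u ⟨w, hw⟩ v hv huv
    refine ⟨w.concat huv, fun z hz => ?_⟩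
    rw [Walk.support_concat, List.mem_append, List.mem_singleton] at hz
    rcases hz with h | rfl
    · exact hw z h
    · exact hv

end Cons

end Graph

/-- For a bipartite graft `(G, T)` and a minimum join `F`: for every
edge `xy ∈ F` there is exactly one `K` that is a decapital distance component of
`(G, T)` with respect to some root `r` and has `x` and `y` as its `F`-root and
`F`-antiroot respectively (i.e. `x ∈ K` and `y ∉ K`, `s(x,y)` being the unique
edge of `δ_G(K) ∩ F`). -/
theorem stmt_9 {V : Type*} [Fintype V] [DecidableEq V]
    (G : SimpleGraph V) (T : Set V) (hbip : G.Colorable 2) (hgraft : IsGraft G T)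
    (F : Set (Sym2 V)) (hF : IsMinJoin G T F) :
    ∀ x y : V, s(x, y) ∈ F →
      ∃! K : Set V, (∃ r : V, IsDecapDistComp G F r K) ∧ x ∈ K ∧ y ∉ K := by
  classical
  intro x y hxy
  lift F to Finset (Sym2 V) using F.toFinite
  have B := IsMinJoin.cons hbip hF
  obtain ⟨K, hK, hx, hy⟩ := B.exists_decap hxy
  refine ⟨K, ⟨⟨y, hK⟩, hx, hy⟩, ?_⟩
  rintro K' ⟨⟨r, hK'⟩, hx', hy'⟩
  exact (B.decap_subset hxy hK' hx' hy' hK hx hy).antisymm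
    (B.decap_subset hxy hK hx hy hK' hx' hy')
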